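/- Let n ≥ 1 and t > 0. For every x ∈ W^{n+1} and every (x',y') ∈ W^{n+1,n}, integrating q^n_t over the interlaced middle coordinates of its first argument yields the (n+1)-point Karlin–McGregor kernel: ∫_{W^n(x)} q^n_t((x,y),(x',y')) dy = p^{n+1}_t(x,x'). -/

import Mathlib

open MeasureTheory Real

/-- The centered Gaussian density with variance `t`. -/
noncomputable def gauss (t y : ℝ) : ℝ :=
  (Real.sqrt (2 * Real.pi * t))⁻¹ * Real.exp (-y ^ 2 / (2 * t))

/-- The Gaussian cumulative distribution function `Φ_t`. -/
noncomputable def gaussCDF (t y : ℝ) : ℝ := ∫ z in Set.Iic y, gauss t z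

/-- The derivative `φ'_t` of the Gaussian density. -/
noncomputable def gaussDeriv (t y : ℝ) : ℝ :=
  -y / Real.sqrt (2 * Real.pi * t ^ 3) * Real.exp (-y ^ 2 / (2 * t))

/-- The kernel `q^n_t((x,y),(x',y'))`, a `(2n+1)×(2n+1)` block determinant. -/
noncomputable def qKer (n : ℕ) (t : ℝ) (x x' : Fin (n + 1) → ℝ) (y y' : Fin n → ℝ) : ℝ :=
  Matrix.det (Matrix.fromBlocks
    (Matrix.of fun i j : Fin (n + 1) => gauss t (x' j - x i))
    (Matrix.of fun (i : Fin (n + 1)) (j : Fin n) =>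
      gaussCDF t (y' j - x i) - (if (i : ℕ) ≤ (j : ℕ) then (1 : ℝ) else 0))
    (Matrix.of fun (i : Fin n) (j : Fin (n + 1)) => gaussDeriv t (x' j - y i))
    (Matrix.of fun i j : Fin n => gauss t (y' j - y i)))

/-- The Karlin–McGregor kernel `p^m_t(x,x') = det{φ_t(x'_j − x_i)}`. -/
noncomputable def pKer (m : ℕ) (t : ℝ) (x x' : Fin m → ℝ) : ℝ :=
  Matrix.det (Matrix.of fun i j : Fin m => gauss t (x' j - x i))

/-- The interlacing region `W^n(x) = {y : x_1 ≤ y_1 ≤ x_2 ≤ … ≤ y_n ≤ x_{n+1}}`. -/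
def WintAt (n : ℕ) (x : Fin (n + 1) → ℝ) : Set (Fin n → ℝ) :=
  {y | ∀ i : Fin n, x i.castSucc ≤ y i ∧ y i ≤ x i.succ}

lemma gauss_hasDeriv (t : ℝ) (ht : 0 < t) (y : ℝ) :
    HasDerivAt (gauss t) (gaussDeriv t y) y := by
  have h1 : HasDerivAt (fun y : ℝ => -y ^ 2 / (2 * t)) (-(2 * y) / (2 * t)) y := by
    have := ((hasDerivAt_pow 2 y).neg).div_const (2 * t)
    simpa using this
  have h2 := (h1.exp).const_mul ((Real.sqrt (2 * Real.pi * t))⁻¹)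
  have hs : Real.sqrt (2 * Real.pi * t ^ 3) = t * Real.sqrt (2 * Real.pi * t) := by
    rw [show 2 * Real.pi * t ^ 3 = t ^ 2 * (2 * Real.pi * t) by ring,
      Real.sqrt_mul (by positivity), Real.sqrt_sq ht.le]
  have h3 : Real.sqrt (2 * Real.pi * t) ≠ 0 := by positivity
  unfold gaussDeriv
  rw [hs]
  refine HasDerivAt.congr_deriv h2 ?_
  field_simp

lemma gauss_cont (t : ℝ) : Continuous (gauss t) := by
  unfold gauss; fun_prop

lemma gaussDeriv_cont (t : ℝ) : Continuous (gaussDeriv t) := by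
  unfold gaussDeriv; fun_prop

lemma gauss_integrable (t : ℝ) (ht : 0 < t) : Integrable (gauss t) := by
  have := (integrable_exp_neg_mul_sq (b := 1 / (2 * t)) (by positivity)).const_mul
    ((Real.sqrt (2 * Real.pi * t))⁻¹)
  refine this.congr (Filter.Eventually.of_forall fun y => ?_)
  simp only [gauss]
  congr 2
  field_simp

lemma int_gaussDeriv (t : ℝ) (ht : 0 < t) (a b c : ℝ) (hab : a ≤ b) :
    ∫ y in Set.Icc a b, gaussDeriv t (c - y) = gauss t (c - a) - gauss t (c - b) := by
  rw [integral_Icc_eq_integral_Ioc, ← intervalIntegral.integral_of_le hab,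
    intervalIntegral.integral_comp_sub_left (fun y => gaussDeriv t y) c]
  exact intervalIntegral.integral_eq_sub_of_hasDerivAt (fun y _ => gauss_hasDeriv t ht y)
    ((gaussDeriv_cont t).intervalIntegrable _ _)

lemma int_gauss (t : ℝ) (ht : 0 < t) (a b c : ℝ) (hab : a ≤ b) :
    ∫ y in Set.Icc a b, gauss t (c - y) = gaussCDF t (c - a) - gaussCDF t (c - b) := by
  rw [integral_Icc_eq_integral_Ioc, ← intervalIntegral.integral_of_le hab,
    intervalIntegral.integral_comp_sub_left (fun y => gauss t y) c]
  exact (intervalIntegral.integral_Iic_sub_Iic (gauss_integrable t ht).integrableOn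
    (gauss_integrable t ht).integrableOn).symm

lemma int_det {m n : ℕ} (T : Fin m → Fin m ⊕ Fin n → ℝ)
    (f : Fin m ⊕ Fin n → ℝ → ℝ) (hf : ∀ j, Continuous (f j)) (a b : Fin n → ℝ) :
    ∫ y in Set.univ.pi (fun i => Set.Icc (a i) (b i)),
      Matrix.det (Matrix.of (Sum.elim T (fun i j => f j (y i))) :
        Matrix (Fin m ⊕ Fin n) (Fin m ⊕ Fin n) ℝ)
    = Matrix.det (Matrix.of (Sum.elim T (fun i j => ∫ s in Set.Icc (a i) (b i), f j s)) :
        Matrix (Fin m ⊕ Fin n) (Fin m ⊕ Fin n) ℝ) := by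
  have hm : (volume : Measure (Fin n → ℝ)).restrict
      (Set.univ.pi (fun i => Set.Icc (a i) (b i)))
      = Measure.pi (fun i => (volume : Measure ℝ).restrict (Set.Icc (a i) (b i))) := by
    rw [volume_pi, Measure.restrict_pi_pi]
  rw [hm]
  have hd : ∀ M : Matrix (Fin m ⊕ Fin n) (Fin m ⊕ Fin n) ℝ, M.det =
      ∑ σ : Equiv.Perm (Fin m ⊕ Fin n), ((Equiv.Perm.sign σ : ℤ) : ℝ) * ∏ i, M i (σ i) := by
    intro M
    rw [← Matrix.det_transpose, Matrix.det_apply']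
    rfl
  simp_rw [hd,
    Fintype.prod_sum_type, Matrix.of_apply, Sum.elim_inl, Sum.elim_inr]
  have hi : ∀ (i : Fin n) (j), Integrable (f j) (volume.restrict (Set.Icc (a i) (b i))) :=
    fun i j => ((hf j).continuousOn.integrableOn_compact isCompact_Icc)
  rw [integral_finsetSum]
  · refine Finset.sum_congr rfl fun σ _ => ?_
    rw [integral_const_mul, integral_const_mul]
    congr 2
    exact integral_fintype_prod_eq_prod (fun (i : Fin n) (s : ℝ) => f (σ (Sum.inr i)) s)
  · intro σ _
    refine Integrable.const_mul (Integrable.const_mul ?_ _) _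
    exact Integrable.fintype_prod (f := fun (i : Fin n) (s : ℝ) => f (σ (Sum.inr i)) s)
      (fun i => hi i _)

/-- Integrating `q^n_t` over the interlaced middle coordinates of its first argument
yields the `(n+1)`-point Karlin–McGregor kernel. -/
theorem stmt5 (n : ℕ) (hn : 1 ≤ n) (t : ℝ) (ht : 0 < t)
    (x x' : Fin (n + 1) → ℝ) (y' : Fin n → ℝ)
    (hx : Monotone x) (hx'y' : ∀ i : Fin n, x' i.castSucc ≤ y' i ∧ y' i ≤ x' i.succ) :
    ∫ y in WintAt n x, qKer n t x x' y y' = pKer (n + 1) t x x' := by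
  have hW : WintAt n x = Set.univ.pi (fun i : Fin n => Set.Icc (x i.castSucc) (x i.succ)) := by
    ext y
    simp only [WintAt, Set.mem_pi, Set.mem_setOf_eq, Set.mem_univ, Set.mem_Icc, true_imp_iff]
  set A : Matrix (Fin (n+1)) (Fin (n+1)) ℝ := Matrix.of fun i j => gauss t (x' j - x i) with hA
  set B : Matrix (Fin (n+1)) (Fin n) ℝ := Matrix.of fun i j =>
    gaussCDF t (y' j - x i) - (if (i : ℕ) ≤ (j : ℕ) then (1 : ℝ) else 0) with hB
  let f : Fin (n+1) ⊕ Fin n → ℝ → ℝ :=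
    Sum.elim (fun j s => gaussDeriv t (x' j - s)) (fun j s => gauss t (y' j - s))
  have hf : ∀ j, Continuous (f j) := by
    rintro (j | j)
    · exact (gaussDeriv_cont t).comp (by fun_prop)
    · exact (gauss_cont t).comp (by fun_prop)
  let T : Fin (n+1) → Fin (n+1) ⊕ Fin n → ℝ := fun i => Sum.elim (A i) (B i)
  have hq : ∀ y, qKer n t x x' y y' = Matrix.det (Matrix.of (Sum.elim T
      (fun i j => f j (y i))) : Matrix (Fin (n+1) ⊕ Fin n) (Fin (n+1) ⊕ Fin n) ℝ) := by
    intro y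
    unfold qKer
    congr 1
    ext (i | i) (j | j) <;> rfl
  simp_rw [hq]
  rw [hW, int_det T f hf]
  let L : Matrix (Fin n) (Fin (n+1)) ℝ := Matrix.of fun i k =>
    (if i.castSucc = k then 1 else 0) - (if i.succ = k then 1 else 0)
  have key : (Matrix.of (Sum.elim T
      (fun i j => ∫ s in Set.Icc (x (Fin.castSucc i)) (x (Fin.succ i)), f j s)) :
        Matrix (Fin (n+1) ⊕ Fin n) (Fin (n+1) ⊕ Fin n) ℝ)
      = Matrix.fromBlocks 1 0 L 1 * Matrix.fromBlocks A B 0 1 := by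
    rw [Matrix.fromBlocks_multiply]
    have hle : ∀ i : Fin n, x i.castSucc ≤ x i.succ := fun i => hx (Fin.castSucc_lt_succ).le
    ext (i | i) (j | j)
    · simp [T]
    · simp [T]
    · simp [f, L, Matrix.mul_apply, sub_mul, Finset.sum_sub_distrib,
        int_gaussDeriv t ht _ _ _ (hle i), hA]
    · simp [f, L, Matrix.mul_apply, sub_mul, Finset.sum_sub_distrib,
        int_gauss t ht _ _ _ (hle i), hB, Matrix.one_apply]
      simp only [Fin.ext_iff]
      split_ifs <;> first | omega | ring
  rw [key, Matrix.det_mul, Matrix.det_fromBlocks_zero₁₂, Matrix.det_fromBlocks_zero₂₁]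
  simp [pKer, hA]
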